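/- arXiv:2105.00254 — 6 statements merged into one kernel-verified Lean document; each statement's English description precedes it below -/
import Mathlib

section
/- Every connected simple graph of even order contains a 0-perfect forest, i.e., a spanning forest F such that every connected component of F is an induced subgraph of G and every vertex of F has odd degree in F. -/
open SimpleGraph

/-- The degree of `v` in `F`, defined via `Set.ncard` so that no decidability
instances are needed. -/
noncomputable def fdeg {V : Type*} (F : SimpleGraph V) (v : V) : ℕ :=
  (F.neighborSet v).ncard

/-- `F` is a semiperfect spanning forest of `G`: `F` is a spanning subgraph of `G`
that is a forest, and every connected component of `F` is an induced subgraph of `G`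
(i.e. every `G`-edge between vertices in the same component of `F` is an edge of `F`). -/
def IsSemiperfectForest {V : Type*} (G F : SimpleGraph V) : Prop :=
  F ≤ G ∧ F.IsAcyclic ∧ ∀ x y : V, F.Reachable x y → G.Adj x y → F.Adj x y

/-!
Among all spanning subgraphs of `G` with odd-degree set `T` (the `T`-joins of `G`), take one, `F`,
with the fewest edges. If a subgraph `K` of `F` joins the ends `x`, `y` of an edge of `G`, then `K`
contains an `{x, y}`-join `H`, and `F ∆ H ∆ {xy}` is again a `T`-join, with at most `|F| - |H| + 1`
edges. So `H` is a single edge, which must be `xy`, and hence `xy` lies in `K`. With `K = F` this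
says that the components of `F` are induced; with `K = F - xy` it says that `F` has no cycle.
-/

open scoped symmDiff

lemma odd_ncard_symmDiff {α : Type*} {s t : Set α} (hs : s.Finite) (ht : t.Finite) :
    Odd (s ∆ t).ncard ↔ Xor (Odd s.ncard) (Odd t.ncard) := by
  have hst : (s ∆ t).ncard = (s \ t).ncard + (t \ s).ncard :=
    Set.ncard_union_eq disjoint_sdiff_sdiff hs.sdiff ht.sdiff
  have hs' := Set.ncard_inter_add_ncard_sdiff_eq_ncard s t hs
  have ht' := Set.ncard_inter_add_ncard_sdiff_eq_ncard t s ht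
  rw [Set.inter_comm] at ht'
  grind [Xor]

lemma even_ncard_sdiff_pair {α : Type*} {s : Set α} {x y : α} (hs : Even s.ncard) (hxy : x ≠ y)
    (hmem : x ∈ s ↔ y ∈ s) : Even (s \ {x, y}).ncard := by
  by_cases hx : x ∈ s
  · rw [Set.ncard_sdiff (Set.pair_subset hx (hmem.1 hx)), Set.ncard_pair hxy]
    exact hs.tsub even_two
  · rwa [sdiff_eq_left.2]
    simp [Set.disjoint_insert_right, hx, mt hmem.2 hx]

section TJoin

variable {V : Type*} {F G H K : SimpleGraph V} {S T : Set V} {x y : V}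

lemma edgeSet_symmDiff (F H : SimpleGraph V) : (F ∆ H).edgeSet = F.edgeSet ∆ H.edgeSet := by
  simp only [symmDiff_def, edgeSet_sup, edgeSet_sdiff, Set.sup_eq_union]

lemma finite_neighborSet_of_finite_edgeSet (hF : F.edgeSet.Finite) (v : V) :
    (F.neighborSet v).Finite :=
  hF.preimage (f := fun w => s(v, w)) fun _ _ _ _ h => Sym2.congr_right.1 h

/-- The set of vertices of odd degree. A vertex of infinite degree is not in it, since `fdeg` is
then `0`. -/
def oddVertices (F : SimpleGraph V) : Set V := {v | Odd (fdeg F v)}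

lemma oddVertices_bot : oddVertices (⊥ : SimpleGraph V) = ∅ := by
  simp [oddVertices, fdeg, neighborSet]

lemma oddVertices_symmDiff (hF : F.edgeSet.Finite) (hH : H.edgeSet.Finite) :
    oddVertices (F ∆ H) = oddVertices F ∆ oddVertices H := by
  ext v
  exact odd_ncard_symmDiff (finite_neighborSet_of_finite_edgeSet hF v)
    (finite_neighborSet_of_finite_edgeSet hH v)

lemma oddVertices_edge (hxy : x ≠ y) : oddVertices (edge x y) = {x} ∆ {y} := by
  ext v
  have hnbr : (edge x y).neighborSet v = {w | v = x ∧ w = y} ∪ {w | v = y ∧ w = x} := by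
    ext w
    simp only [mem_neighborSet, edge_adj, Set.mem_union, Set.mem_ofPred_eq]
    grind
  by_cases hx : v = x <;> by_cases hy : v = y <;>
    simp_all [oddVertices, fdeg, Set.mem_symmDiff]

lemma exists_adj_of_mem_oddVertices (hx : x ∈ oddVertices F) : ∃ y, F.Adj x y :=
  Set.nonempty_of_ncard_ne_zero (Odd.pos hx).ne'

/-- `F` is a `T`-join of `G`: a spanning subgraph of `G` whose odd-degree vertices are exactly
those of `T`. Only finitely many edges are allowed, so that edges can be counted on infinite `V`. -/
structure IsTJoin (G : SimpleGraph V) (T : Set V) (F : SimpleGraph V) : Prop where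
  le : F ≤ G
  finite_edgeSet : F.edgeSet.Finite
  oddVertices_eq : oddVertices F = T

lemma isTJoin_bot (G : SimpleGraph V) : IsTJoin G ∅ ⊥ where
  le := bot_le
  finite_edgeSet := by simp
  oddVertices_eq := oddVertices_bot

lemma isTJoin_edge (hxy : G.Adj x y) : IsTJoin G ({x} ∆ {y}) (edge x y) where
  le := (edge_le_iff G).2 (.inr hxy)
  finite_edgeSet := by simp [edgeSet_edge_of_ne hxy.ne]
  oddVertices_eq := oddVertices_edge hxy.ne

namespace IsTJoin

lemma mono (hF : IsTJoin K T F) (hKG : K ≤ G) : IsTJoin G T F :=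
  { hF with le := hF.le.trans hKG }

lemma symmDiff (hF : IsTJoin G S F) (hH : IsTJoin G T H) : IsTJoin G (S ∆ T) (F ∆ H) where
  le := symmDiff_le_sup.trans (sup_le hF.le hH.le)
  finite_edgeSet := by
    rw [edgeSet_symmDiff]
    exact hF.finite_edgeSet.symmDiff hH.finite_edgeSet
  oddVertices_eq := by
    rw [oddVertices_symmDiff hF.finite_edgeSet hH.finite_edgeSet, hF.oddVertices_eq,
      hH.oddVertices_eq]

lemma adj_of_ncard_edgeSet_le_one (hH : IsTJoin G ({x} ∆ {y}) H) (hxy : x ≠ y)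
    (hcard : H.edgeSet.ncard ≤ 1) : H.Adj x y := by
  obtain ⟨a, hxa⟩ : ∃ a, H.Adj x a :=
    exists_adj_of_mem_oddVertices (by simp [hH.oddVertices_eq, Set.mem_symmDiff, hxy])
  obtain ⟨b, hyb⟩ : ∃ b, H.Adj y b :=
    exists_adj_of_mem_oddVertices (by simp [hH.oddVertices_eq, Set.mem_symmDiff, hxy.symm])
  have hedge : s(x, a) = s(y, b) := (Set.ncard_le_one hH.finite_edgeSet).1 hcard _ hxa _ hyb
  obtain ⟨rfl, -⟩ | ⟨-, rfl⟩ := Sym2.eq_iff.1 hedge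
  · exact absurd rfl hxy
  · exact hxa

end IsTJoin

lemma exists_isTJoin_of_reachable (hxy : G.Reachable x y) : ∃ H, IsTJoin G ({x} ∆ {y}) H := by
  obtain ⟨p⟩ := hxy
  induction p with
  | nil => exact ⟨⊥, symmDiff_self (_ : Set V) ▸ isTJoin_bot G⟩
  | @cons x z y hxz _ ih =>
    obtain ⟨H, hH⟩ := ih
    refine ⟨edge x z ∆ H, ?_⟩
    have hcancel : ({x} ∆ {z} : Set V) ∆ ({z} ∆ {y}) = {x} ∆ {y} := by
      rw [symmDiff_assoc, symmDiff_symmDiff_cancel_left]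
    exact hcancel ▸ (isTJoin_edge hxz).symmDiff hH

lemma exists_isTJoin (hT : T.Finite) (heven : ∀ c : G.ConnectedComponent, Even (c.supp ∩ T).ncard) :
    ∃ F, IsTJoin G T F := by
  induction hn : T.ncard using Nat.strong_induction_on generalizing T with
  | _ n ih =>
    obtain rfl | ⟨x, hx⟩ := T.eq_empty_or_nonempty
    · exact ⟨⊥, isTJoin_bot G⟩
    obtain ⟨y, ⟨hyc, hy⟩, hyx⟩ : ∃ y ∈ (G.connectedComponentMk x).supp ∩ T, y ≠ x := by
      have hpos : 0 < ((G.connectedComponentMk x).supp ∩ T).ncard :=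
        (Set.ncard_pos (hT.inter_of_right _)).2 ⟨x, rfl, hx⟩
      have := heven (G.connectedComponentMk x)
      exact Set.exists_ne_of_one_lt_ncard (by grind) x
    have hcard : (T \ {x, y}).ncard < n :=
      hn ▸ Set.ncard_lt_ncard (Set.ssubset_iff_exists.2 ⟨Set.sdiff_subset, x, hx, by simp⟩) hT
    have heven' (c : G.ConnectedComponent) : Even (c.supp ∩ (T \ {x, y})).ncard := by
      rw [← Set.inter_sdiff_assoc]
      refine even_ncard_sdiff_pair (heven c) hyx.symm ?_
      have hmk : G.connectedComponentMk y = G.connectedComponentMk x := hyc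
      simp only [Set.mem_inter_iff, ConnectedComponent.mem_supp_iff, hmk, hx, hy]
    obtain ⟨F, hF⟩ := ih _ hcard hT.sdiff heven' rfl
    obtain ⟨H, hH⟩ := exists_isTJoin_of_reachable (ConnectedComponent.exact hyc.symm)
    have hadd : (T \ {x, y}) ∆ ({x} ∆ {y}) = T := by
      ext v
      simp only [Set.mem_symmDiff, Set.mem_sdiff, Set.mem_insert_iff, Set.mem_singleton_iff]
      grind
    exact ⟨F ∆ H, hadd ▸ hF.symmDiff hH⟩

/-- A `T`-join with the fewest edges. -/
def IsMinTJoin (G : SimpleGraph V) (T : Set V) (F : SimpleGraph V) : Prop :=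
  MinimalFor (IsTJoin G T) (fun F => F.edgeSet.ncard) F

namespace IsMinTJoin

lemma ncard_edgeSet_le_one (hF : IsMinTJoin G T F) (hxy : G.Adj x y)
    (hH : IsTJoin F ({x} ∆ {y}) H) : H.edgeSet.ncard ≤ 1 := by
  have hexchange : IsTJoin G T ((F ∆ H) ∆ edge x y) := by
    have h := (hF.prop.symmDiff (hH.mono hF.prop.le)).symmDiff (isTJoin_edge hxy)
    rwa [symmDiff_symmDiff_cancel_right] at h
  have hsub : ((F ∆ H) ∆ edge x y).edgeSet ⊆ insert s(x, y) (F.edgeSet \ H.edgeSet) := by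
    rw [edgeSet_symmDiff, edgeSet_symmDiff, edgeSet_edge_of_ne hxy.ne,
      symmDiff_of_ge (edgeSet_mono hH.le), Set.insert_eq, Set.union_comm]
    exact symmDiff_le_sup
  have hfin := hF.prop.finite_edgeSet
  have hle : F.edgeSet.ncard ≤ (F.edgeSet \ H.edgeSet).ncard + 1 := calc
    F.edgeSet.ncard ≤ ((F ∆ H) ∆ edge x y).edgeSet.ncard := hF.le hexchange
    _ ≤ (insert s(x, y) (F.edgeSet \ H.edgeSet)).ncard :=
      Set.ncard_le_ncard hsub (hfin.sdiff.insert _)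
    _ ≤ (F.edgeSet \ H.edgeSet).ncard + 1 := Set.ncard_insert_le _ _
  have := Set.ncard_sdiff_add_ncard_of_subset (edgeSet_mono hH.le) hfin
  lia

lemma adj_of_reachable (hF : IsMinTJoin G T F) (hKF : K ≤ F) (hreach : K.Reachable x y)
    (hxy : G.Adj x y) : K.Adj x y := by
  obtain ⟨H, hH⟩ := exists_isTJoin_of_reachable hreach
  exact hH.le (hH.adj_of_ncard_edgeSet_le_one hxy.ne (hF.ncard_edgeSet_le_one hxy (hH.mono hKF)))

lemma isAcyclic (hF : IsMinTJoin G T F) : F.IsAcyclic := by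
  refine isAcyclic_iff_forall_adj_isBridge.2 fun x y hxy => isBridge_iff.2 fun hreach => ?_
  have hdel := hF.adj_of_reachable (deleteEdges_le _) hreach (hF.prop.le hxy)
  simp [deleteEdges_adj] at hdel

lemma isSemiperfectForest (hF : IsMinTJoin G T F) : IsSemiperfectForest G F :=
  ⟨hF.prop.le, hF.isAcyclic, fun _ _ => hF.adj_of_reachable le_rfl⟩

end IsMinTJoin

end TJoin

theorem connected_even_order_has_zero_perfect_forest_general {V : Type*}
    (G : SimpleGraph V) {T : Set V} (hT : T.Finite)
    (heven : ∀ c : G.ConnectedComponent, Even (c.supp ∩ T).ncard) :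
    ∃ F : SimpleGraph V, IsSemiperfectForest G F ∧ F.edgeSet.Finite ∧
      ∀ v : V, Odd (fdeg F v) ↔ v ∈ T := by
  obtain ⟨F, hF⟩ : ∃ F, IsMinTJoin G T F :=
    exists_minimalFor_of_wellFoundedLT _ _ (exists_isTJoin hT heven)
  exact ⟨F, hF.isSemiperfectForest, hF.prop.finite_edgeSet, Set.ext_iff.1 hF.prop.oddVertices_eq⟩

/-- Every connected simple graph of even order contains a 0-perfect forest:
a semiperfect spanning forest in which every vertex has odd degree. -/
theorem connected_even_order_has_zero_perfect_forest {V : Type*} [Fintype V]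
    (G : SimpleGraph V) (hG : G.Connected) (heven : Even (Fintype.card V)) :
    ∃ F : SimpleGraph V, IsSemiperfectForest G F ∧ ∀ v : V, Odd (fdeg F v) := by
  have hsupp (c : G.ConnectedComponent) : c.supp = Set.univ :=
    Set.eq_univ_of_forall fun _ => hG.preconnected.subsingleton_connectedComponent.elim _ _
  obtain ⟨F, hF, -, hodd⟩ := connected_even_order_has_zero_perfect_forest_general
    G Set.finite_univ fun c => by simpa [hsupp] using heven
  exact ⟨F, hF, fun v => (hodd v).2 trivial⟩
end

section
/- Let G be a connected graph and let f : V(G) → {0,1} be a function with ∑_{v ∈ V(G)} f(v) even. If H is an f-parity subgraph of G with the minimum possible number of edges (among all f-parity subgraphs of G), then H is an f-parity perfect forest, i.e., H is a forest each of whose connected components is an induced subgraph of G. -/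
open SimpleGraph

/-!
Taking the symmetric difference of `H` with a cycle `C` of `G` changes no degree parity, and it
changes the number of edges by `|C \ H| - |C ∩ H|`. Hence a minimum `H` contains at most half of the
edges of `C`, and since `C` has at least three edges, at least two of them lie outside `H`. A cycle
inside `H` has none there, and a path of `H` closed up by an edge of `G` has at most one.
-/

open scoped symmDiff

theorem ncard_symmDiff_add_two_mul_ncard_inter {α : Type*} {s t : Set α}
    (hs : s.Finite) (ht : t.Finite) : (s ∆ t).ncard + 2 * (s ∩ t).ncard = s.ncard + t.ncard := by
  have hst : (s ∆ t).ncard = (s \ t).ncard + (t \ s).ncard :=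
    Set.ncard_union_eq disjoint_sdiff_sdiff hs.sdiff ht.sdiff
  have hs' := Set.ncard_inter_add_ncard_sdiff_eq_ncard s t hs
  have ht' := Set.ncard_inter_add_ncard_sdiff_eq_ncard t s ht
  rw [Set.inter_comm] at ht'
  lia

section SymmDiff

variable {V : Type*} (H K : SimpleGraph V)

theorem edgeSet_symmDiff_s2 : (H ∆ K).edgeSet = H.edgeSet ∆ K.edgeSet := by
  simp only [symmDiff_def, edgeSet_sup, edgeSet_sdiff, Set.sup_eq_union]

theorem neighborSet_symmDiff (v : V) :
    (H ∆ K).neighborSet v = H.neighborSet v ∆ K.neighborSet v := by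
  ext w
  simp [symmDiff_def]

variable {H K}

theorem finite_neighborSet_of_finite_edgeSet_s2 (hH : H.edgeSet.Finite) (v : V) :
    (H.neighborSet v).Finite :=
  hH.preimage (f := fun w ↦ s(v, w)) fun _ _ _ _ h ↦ Sym2.congr_right.mp h

theorem fdeg_symmDiff_modEq_add {v : V} (hH : (H.neighborSet v).Finite)
    (hK : (K.neighborSet v).Finite) : fdeg (H ∆ K) v ≡ fdeg H v + fdeg K v [MOD 2] := by
  unfold fdeg
  rw [neighborSet_symmDiff, ← ncard_symmDiff_add_two_mul_ncard_inter hH hK]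
  simp [Nat.ModEq]

end SymmDiff

section Cycle

variable {V : Type*} {G H : SimpleGraph V} {u v : V}

theorem ncard_edgeSet_eq_length_of_isTrail {p : G.Walk u v} (hp : p.IsTrail) :
    p.edgeSet.ncard = p.length := by
  classical
  rw [← p.coe_edges_toFinset, Set.ncard_coe_finset, List.toFinset_card_of_nodup hp.edges_nodup,
    p.length_edges]

theorem even_fdeg_toSubgraph_of_isCycle {c : G.Walk u u} (hc : c.IsCycle) (v : V) :
    Even (fdeg c.toSubgraph.spanningCoe v) := by
  change Even (c.toSubgraph.neighborSet v).ncard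
  by_cases hv : v ∈ c.support
  · rw [hc.ncard_neighborSet_toSubgraph_eq_two hv]
    exact even_two
  · have hempty : c.toSubgraph.neighborSet v = ∅ :=
      Set.eq_empty_of_forall_notMem fun w hw ↦
        hv (c.mem_verts_toSubgraph.mp (c.toSubgraph.edge_vert hw))
    simp [hempty]

theorem length_le_two_mul_ncard_sdiff_of_isCycle_of_min (hHG : H ≤ G) (hfin : H.edgeSet.Finite)
    (hmin : ∀ H' ≤ G, H'.edgeSet.Finite → (∀ v, fdeg H' v ≡ fdeg H v [MOD 2]) →
      H.edgeSet.ncard ≤ H'.edgeSet.ncard)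
    {c : G.Walk u u} (hc : c.IsCycle) : c.length ≤ 2 * (c.edgeSet \ H.edgeSet).ncard := by
  set C := c.toSubgraph.spanningCoe
  have hCfin : c.edgeSet.Finite := c.edges.finite_toSet
  have hCedge : C.edgeSet = c.edgeSet := by
    rw [Subgraph.edgeSet_spanningCoe, Walk.edgeSet_toSubgraph]
  have hedge : (H ∆ C).edgeSet = H.edgeSet ∆ c.edgeSet := by
    rw [edgeSet_symmDiff_s2, hCedge]
  have hle : H ∆ C ≤ G := symmDiff_le_sup.trans (sup_le hHG c.toSubgraph.spanningCoe_le)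
  have hparity (v : V) : fdeg (H ∆ C) v ≡ fdeg H v [MOD 2] :=
    calc
      fdeg (H ∆ C) v ≡ fdeg H v + fdeg C v [MOD 2] :=
        fdeg_symmDiff_modEq_add (finite_neighborSet_of_finite_edgeSet_s2 hfin v)
          c.finite_neighborSet_toSubgraph
      _ ≡ fdeg H v + 0 [MOD 2] :=
        (Nat.modEq_zero_iff_dvd.mpr (even_fdeg_toSubgraph_of_isCycle hc v).two_dvd).add_left _
  have hcard : H.edgeSet.ncard ≤ (H.edgeSet ∆ c.edgeSet).ncard :=
    hedge ▸ hmin (H ∆ C) hle (hedge ▸ hfin.symmDiff hCfin) hparity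
  have hsymm := ncard_symmDiff_add_two_mul_ncard_inter hfin hCfin
  have hsplit := Set.ncard_inter_add_ncard_sdiff_eq_ncard c.edgeSet H.edgeSet hCfin
  rw [Set.inter_comm] at hsplit
  have hlength := ncard_edgeSet_eq_length_of_isTrail hc.isTrail
  lia

theorem isSemiperfectForest_of_forall_isCycle_nontrivial_sdiff (hHG : H ≤ G)
    (hcycle : ∀ (u : V) (c : G.Walk u u), c.IsCycle → (c.edgeSet \ H.edgeSet).Nontrivial) :
    IsSemiperfectForest G H := by
  have hsubset {x y : V} (p : H.Walk x y) : (p.mapLe hHG).edgeSet ⊆ H.edgeSet := by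
    rw [Walk.edgeSet_mapLe_eq_edgeSet]
    exact p.edges_subset_edgeSet
  refine ⟨hHG, fun u c hc ↦ ?acyclic, fun x y hreach hxy ↦ ?induced⟩
  case acyclic =>
    obtain ⟨e, heC, heH⟩ := (hcycle u (c.mapLe hHG) (hc.mapLe hHG)).nonempty
    exact heH (hsubset c heC)
  case induced =>
    by_contra hxyH
    obtain ⟨p, hp⟩ := hreach.symm.exists_isPath
    have hclosed : (Walk.cons hxy (p.mapLe hHG)).IsCycle :=
      (Walk.cons_isCycle_iff _ hxy).mpr ⟨hp.mapLe hHG, fun h ↦ hxyH (hsubset p h)⟩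
    have houtside : (Walk.cons hxy (p.mapLe hHG)).edgeSet \ H.edgeSet ⊆ {s(x, y)} := by
      rw [Walk.edgeSet_cons, Set.sdiff_subset_iff, Set.union_singleton]
      exact Set.insert_subset_insert (hsubset p)
    exact Set.not_nontrivial_singleton ((hcycle x _ hclosed).mono houtside)

end Cycle

theorem min_parity_subgraph_is_perfect_forest_general {V : Type*} {G H : SimpleGraph V}
    (hHG : H ≤ G) (hfin : H.edgeSet.Finite)
    (hmin : ∀ H' ≤ G, H'.edgeSet.Finite → (∀ v, fdeg H' v ≡ fdeg H v [MOD 2]) →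
      H.edgeSet.ncard ≤ H'.edgeSet.ncard) :
    IsSemiperfectForest G H := by
  refine isSemiperfectForest_of_forall_isCycle_nontrivial_sdiff hHG fun u c hc ↦ ?_
  have hhalf := length_le_two_mul_ncard_sdiff_of_isCycle_of_min hHG hfin hmin hc
  have hthree := hc.three_le_length
  have htwo : 1 < (c.edgeSet \ H.edgeSet).ncard := by lia
  exact (Set.one_lt_ncard_iff_nontrivial_and_finite.mp htwo).1

/-- Let `G` be a connected graph and `f : V → {0,1}` an even-sum function.
If `H` is an `f`-parity spanning subgraph of `G` (i.e. `d_H(x) ≡ f(x) (mod 2)` for all `x`)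
with the minimum possible number of edges among all such subgraphs, then `H` is an
`f`-parity perfect forest: a forest each of whose components is induced in `G`. -/
theorem min_parity_subgraph_is_perfect_forest {V : Type*} [Fintype V]
    (G : SimpleGraph V) (hG : G.Connected)
    (f : V → ℕ) (hf01 : ∀ v, f v ≤ 1) (hfsum : Even (∑ v, f v))
    (H : SimpleGraph V) (hHG : H ≤ G) (hHpar : ∀ x : V, fdeg H x % 2 = f x)
    (hmin : ∀ H' : SimpleGraph V, H' ≤ G → (∀ x : V, fdeg H' x % 2 = f x) →
      H.edgeSet.ncard ≤ H'.edgeSet.ncard) :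
    IsSemiperfectForest G H :=
  min_parity_subgraph_is_perfect_forest_general hHG (Set.toFinite _) fun H' hle _ hpar ↦
    hmin H' hle fun x ↦ Eq.trans (hpar x) (hHpar x)
end

section
/- Let B denote the family of all connected graphs in which every block is a complete graph of odd order. If G is a connected graph of odd order and G belongs to B, then G contains no proper 1-perfect forest. -/
open SimpleGraph

/-- `s` is (the vertex set of) a block of `G`: the induced subgraph on `s` is connected,
has no cut-vertex, and `s` is maximal with these properties. -/
def IsGraphBlock {V : Type*} (G : SimpleGraph V) (s : Set V) : Prop :=
  (G.induce s).Connected ∧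
  (∀ x ∈ s, (G.induce (s \ {x})).Preconnected) ∧
  ∀ t : Set V, s ⊆ t → (G.induce t).Connected →
    (∀ x ∈ t, (G.induce (t \ {x})).Preconnected) → t = s

/-- `G` belongs to the family `B` of connected graphs in which every block is a
complete graph of odd order. -/
def InFamilyB {V : Type*} (G : SimpleGraph V) : Prop :=
  G.Connected ∧ ∀ s : Set V, IsGraphBlock G s →
    (∀ x ∈ s, ∀ y ∈ s, x ≠ y → G.Adj x y) ∧ Odd s.ncard

/-!
Fix a root `r`. Say that the forest `F` leads away from `r` at `x` if no `F`-neighbour of `x` can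
be reached from `r` without passing through `x`; this holds vacuously at `x = r`. Suppose `F` leads
away from `r` at `x` and `x w` is an edge of `F`. The block `B` containing `x` and `w` is a clique,
so `F` restricts to a matching on `B` (a forest has no triangle), and as `B` has odd order some
`z ∈ B` has no `F`-neighbour in `B`. Every neighbour of `z` reachable from `r` while avoiding `z`
lies in `B`, so `F` leads away from `r` at `z` too. Moreover `z` is deeper than `x`: strictly more
vertices are reachable from `r` while avoiding it. Hence a deepest vertex at which `F` leads away
from `r` is isolated in `F`.
-/

section Biconnected

variable {V : Type*} {G : SimpleGraph V} {s : Set V} {u v x y z : V}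

/-- The vertex set `s` induces a connected subgraph without cut-vertices. Blocks are the maximal
such sets; single vertices and edges count as biconnected. -/
def IsBiconnected (G : SimpleGraph V) (s : Set V) : Prop :=
  (G.induce s).Connected ∧ ∀ x ∈ s, (G.induce (s \ {x})).Preconnected

theorem isGraphBlock_iff_maximal_isBiconnected :
    IsGraphBlock G s ↔ Maximal (IsBiconnected G) s := by
  constructor
  · rintro ⟨hconn, hcut, hmax⟩
    exact ⟨⟨hconn, hcut⟩, fun t ht hst ↦ (hmax t hst ht.1 ht.2).le⟩
  · intro hs
    exact ⟨hs.prop.1, hs.prop.2, fun t hst hconn hcut ↦ (hs.eq_of_le ⟨hconn, hcut⟩ hst).symm⟩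

theorem IsBiconnected.exists_isGraphBlock [Finite V] (hs : IsBiconnected G s) :
    ∃ t, s ⊆ t ∧ IsGraphBlock G t := by
  simp only [isGraphBlock_iff_maximal_isBiconnected]
  exact (Set.toFinite {t | IsBiconnected G t}).exists_le_maximal hs

theorem induce_connected_of_forall_adj (hu : u ∈ s) (h : ∀ a ∈ s, a ≠ u → G.Adj u a) :
    (G.induce s).Connected :=
  Connected.of_isUniversal (v := ⟨u, hu⟩) fun a ha ↦ h a a.2 fun hau ↦ ha (Subtype.ext hau.symm)

theorem isBiconnected_of_forall_adj (hu : u ∈ s) (hv : v ∈ s) (huv : u ≠ v)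
    (hu_adj : ∀ a ∈ s, a ≠ u → G.Adj u a) (hv_adj : ∀ a ∈ s, a ≠ v → G.Adj v a) :
    IsBiconnected G s := by
  refine ⟨induce_connected_of_forall_adj hu hu_adj, fun x _ ↦ Connected.preconnected ?_⟩
  rcases eq_or_ne u x with rfl | hux
  · exact induce_connected_of_forall_adj ⟨hv, huv.symm⟩ fun a ha ↦ hv_adj a ha.1
  · exact induce_connected_of_forall_adj ⟨hu, hux⟩ fun a ha ↦ hu_adj a ha.1

theorem isBiconnected_pair_of_adj (h : G.Adj u v) : IsBiconnected G {u, v} := by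
  refine isBiconnected_of_forall_adj (u := u) (v := v) (by simp) (by simp) h.ne ?_ ?_
  · rintro a (rfl | rfl) ha
    exacts [absurd rfl ha, h]
  · rintro a (rfl | rfl) ha
    exacts [h.symm, absurd rfl ha]

theorem isBiconnected_insert_of_isClique (hs : G.IsClique s) (hu : u ∈ s) (hv : v ∈ s)
    (huv : u ≠ v) (huy : G.Adj u y) (hvy : G.Adj v y) : IsBiconnected G (insert y s) := by
  have adj_insert {c : V} (hc : c ∈ s) (hcy : G.Adj c y) : ∀ a ∈ insert y s, a ≠ c → G.Adj c a := by
    rintro a (rfl | ha) hac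
    exacts [hcy, hs hc ha hac.symm]
  exact isBiconnected_of_forall_adj (.inr hu) (.inr hv) huv (adj_insert hu huy) (adj_insert hv hvy)

theorem support_tail_dropLast_of_isCycle {c : G.Walk u u} (hc : c.IsCycle) :
    {a | a ∈ c.tail.dropLast.support} = {a | a ∈ c.support} \ {u} := by
  have tail_not_nil : ¬ c.tail.Nil := fun h ↦ (c.adj_snd hc.not_nil).ne h.eq.symm
  have support_tail : c.tail.dropLast.support ++ [u] = c.tail.support :=
    Walk.support_dropLast_concat tail_not_nil
  have tail_nodup : (c.tail.dropLast.support ++ [u]).Nodup :=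
    support_tail ▸ hc.isPath_tail.support_nodup
  have notMem : u ∉ c.tail.dropLast.support := by
    simpa using List.disjoint_of_nodup_append tail_nodup
  ext a
  rw [Set.mem_sdiff, Set.mem_ofPred_eq, Set.mem_ofPred_eq, ← Walk.cons_support_tail hc.not_nil,
    ← support_tail]
  grind

theorem isBiconnected_support_of_isCycle {c : G.Walk u u} (hc : c.IsCycle) :
    IsBiconnected G {a | a ∈ c.support} := by
  classical
  refine ⟨c.connected_induce_support, fun x hx ↦ ?_⟩
  have rotate_support : {a | a ∈ (c.rotate x hx).support} = {a | a ∈ c.support} :=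
    Set.ext fun _ ↦ c.mem_support_rotate_iff x hx
  rw [← rotate_support, ← support_tail_dropLast_of_isCycle (hc.rotate hx)]
  exact (Walk.connected_induce_support _).preconnected

theorem isCycle_cons_concat_of_isPath {p : G.Walk x y} (hp : p.IsPath) (hzx : G.Adj z x)
    (hyz : G.Adj y z) (hxy : x ≠ y) (hz : z ∉ p.support) :
    (Walk.cons hzx (p.concat hyz)).IsCycle := by
  refine Walk.cons_isCycle_iff _ _ |>.2 ⟨hp.concat hz hyz, ?_⟩
  rw [Walk.edges_concat, List.concat_eq_append, List.mem_append, List.mem_singleton]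
  rintro (hmem | heq)
  · exact hz (p.fst_mem_support_of_mem_edges hmem)
  · exact hxy (Sym2.congr_right.1 (heq.trans Sym2.eq_swap))

end Biconnected

section BlockGraph

variable {V : Type*} {G : SimpleGraph V} {s : Set V} {x y z : V}

/-- A block graph: every block is a clique, of any order. Connectedness is not part of the
notion. -/
def IsBlockGraph (G : SimpleGraph V) : Prop :=
  ∀ s, IsGraphBlock G s → G.IsClique s

theorem InFamilyB.isBlockGraph (hG : InFamilyB G) : IsBlockGraph G :=
  fun s hs x hx y hy ↦ (hG.2 s hs).1 x hx y hy

variable [Finite V]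

theorem IsBlockGraph.isClique_of_isBiconnected (hG : IsBlockGraph G) (hs : IsBiconnected G s) :
    G.IsClique s := by
  obtain ⟨t, hst, ht⟩ := hs.exists_isGraphBlock
  exact (hG t ht).subset hst

theorem IsBlockGraph.adj_of_walk_avoiding (hG : IsBlockGraph G) (hzx : G.Adj z x)
    (hyz : G.Adj y z) (hxy : x ≠ y) (p : G.Walk x y) (hz : z ∉ p.support) : G.Adj x y := by
  classical
  have hcycle := isCycle_cons_concat_of_isPath p.bypass_isPath hzx hyz hxy
    fun h ↦ hz (p.support_bypass_subset_support h)
  refine hG.isClique_of_isBiconnected (isBiconnected_support_of_isCycle hcycle) ?_ ?_ hxy <;> simp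

theorem IsBlockGraph.mem_block_of_walk_avoiding (hG : IsBlockGraph G) (hs : IsGraphBlock G s)
    (hx : x ∈ s) (hz : z ∈ s) (hyz : G.Adj y z) (p : G.Walk x y) (hzp : z ∉ p.support) :
    y ∈ s := by
  rcases eq_or_ne x y with rfl | hxy
  · exact hx
  have hzx : z ≠ x := fun h ↦ hzp (h ▸ p.start_mem_support)
  have hxy_adj : G.Adj x y := hG.adj_of_walk_avoiding (hG s hs hz hx hzx) hyz hxy p hzp
  have hinsert : IsBiconnected G (insert y s) :=
    isBiconnected_insert_of_isClique (hG s hs) hx hz hzx.symm hxy_adj hyz.symm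
  have hmax := isGraphBlock_iff_maximal_isBiconnected.1 hs
  exact hmax.le_of_ge hinsert (Set.subset_insert y s) (Set.mem_insert y s)

end BlockGraph

section SemiperfectForest

variable {V : Type*} {G F : SimpleGraph V} {s : Set V} {x y z : V}

theorem IsSemiperfectForest.not_adj_of_common_neighbor (hF : IsSemiperfectForest G F)
    (hxy : F.Adj x y) (hxz : F.Adj x z) : ¬ G.Adj y z := by
  classical
  intro hG
  have hyz : F.Adj y z := hF.2.2 y z (hxy.symm.reachable.trans hxz.reachable) hG
  exact hF.2.1.cliqueFree le_rfl {x, y, z} (is3Clique_triple_iff.2 ⟨hxy, hxz, hyz⟩)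

theorem IsSemiperfectForest.exists_forall_not_adj_of_odd_isClique (hF : IsSemiperfectForest G F)
    (hs : G.IsClique s) (hodd : Odd s.ncard) : ∃ z ∈ s, ∀ y ∈ s, ¬ F.Adj z y := by
  by_contra! hmatched
  have hmatching : ((⊤ : F.Subgraph).induce s).IsMatching := by
    intro x hx
    obtain ⟨y, hy, hxy⟩ := hmatched x hx
    refine ⟨y, ⟨hx, hy, hxy⟩, fun z ⟨_, hz, hxz⟩ ↦ ?_⟩
    by_contra hzy
    exact hF.not_adj_of_common_neighbor hxz hxy (hs hz hy hzy)
  have : Fintype ((⊤ : F.Subgraph).induce s).verts := (Set.finite_of_ncard_pos hodd.pos).fintype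
  have heven : Even ((⊤ : F.Subgraph).induce s).verts.ncard := by
    rw [Set.ncard_eq_toFinset_card']
    exact hmatching.even_card
  exact Nat.not_even_iff_odd.2 hodd heven

end SemiperfectForest

section ReachableAvoiding

variable {V : Type*} {G : SimpleGraph V} {r x z a b : V}

/-- The vertices that a walk from `r` can reach without passing through `x`. It is empty for
`x = r`, and the larger it is, the farther `x` lies from `r`. -/
def reachableAvoiding (G : SimpleGraph V) (r x : V) : Set V :=
  {a | ∃ p : G.Walk r a, x ∉ p.support}

theorem notMem_reachableAvoiding_self : x ∉ reachableAvoiding G r x :=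
  fun ⟨p, hp⟩ ↦ hp p.end_mem_support

theorem reachableAvoiding_root : reachableAvoiding G r r = ∅ :=
  Set.eq_empty_of_forall_notMem fun _ ⟨p, hp⟩ ↦ hp p.start_mem_support

theorem mem_reachableAvoiding_of_adj (ha : a ∈ reachableAvoiding G r x) (hab : G.Adj a b)
    (hbx : b ≠ x) : b ∈ reachableAvoiding G r x := by
  obtain ⟨p, hp⟩ := ha
  exact ⟨p.concat hab, by simp [Walk.support_concat, hp, hbx.symm]⟩

theorem exists_walk_of_mem_reachableAvoiding (ha : a ∈ reachableAvoiding G r x)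
    (hb : b ∈ reachableAvoiding G r x) : ∃ p : G.Walk a b, x ∉ p.support := by
  obtain ⟨p, hp⟩ := ha
  obtain ⟨q, hq⟩ := hb
  exact ⟨p.reverse.append q, by simp [Walk.mem_support_append_iff, hp, hq]⟩

theorem reachableAvoiding_subset (hz : z ∉ reachableAvoiding G r x) :
    reachableAvoiding G r x ⊆ reachableAvoiding G r z := by
  classical
  rintro a ⟨p, hp⟩
  exact ⟨p, fun hzp ↦ hz ⟨p.takeUntil z hzp, fun h ↦ hp (p.support_takeUntil_subset_support hzp h)⟩⟩

theorem mem_reachableAvoiding_of_notMem (hrx : G.Reachable r x) (hzx : z ≠ x)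
    (hz : z ∉ reachableAvoiding G r x) : x ∈ reachableAvoiding G r z := by
  classical
  obtain ⟨p, hp⟩ := hrx.exists_isPath
  refine ⟨p, fun hzp ↦ hz ⟨p.takeUntil z hzp, ?_⟩⟩
  exact Walk.endpoint_notMem_support_takeUntil hp hzp hzx.symm

theorem reachableAvoiding_ssubset (hrx : G.Reachable r x) (hzx : z ≠ x)
    (hz : z ∉ reachableAvoiding G r x) : reachableAvoiding G r x ⊂ reachableAvoiding G r z :=
  (Set.ssubset_iff_of_subset (reachableAvoiding_subset hz)).2
    ⟨x, mem_reachableAvoiding_of_notMem hrx hzx hz, notMem_reachableAvoiding_self⟩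

end ReachableAvoiding

section Descent

variable {V : Type*} [Finite V] {G F : SimpleGraph V} {s : Set V} {r x z : V}

theorem IsBlockGraph.disjoint_neighborSet_reachableAvoiding (hG : IsBlockGraph G) (hFG : F ≤ G)
    (hs : IsGraphBlock G s) (hx : x ∈ s) (hz : z ∈ s) (hxr : x ∈ reachableAvoiding G r z)
    (hzF : ∀ y ∈ s, ¬ F.Adj z y) : Disjoint (F.neighborSet z) (reachableAvoiding G r z) := by
  refine Set.disjoint_left.2 fun y hzy hyr ↦ ?_
  obtain ⟨p, hp⟩ := exists_walk_of_mem_reachableAvoiding hxr hyr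
  exact hzF y (hG.mem_block_of_walk_avoiding hs hx hz (hFG hzy).symm p hp) hzy

theorem InFamilyB.exists_reachableAvoiding_ssubset (hG : InFamilyB G)
    (hF : IsSemiperfectForest G F) (hx : Disjoint (F.neighborSet x) (reachableAvoiding G r x))
    (hx_isolated : ¬ F.IsIsolated x) :
    ∃ z, Disjoint (F.neighborSet z) (reachableAvoiding G r z) ∧
      reachableAvoiding G r x ⊂ reachableAvoiding G r z := by
  obtain ⟨w, hxw⟩ := exists_adj_iff_not_isIsolated.2 hx_isolated
  obtain ⟨B, hsub, hB⟩ := (isBiconnected_pair_of_adj (hF.1 hxw)).exists_isGraphBlock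
  obtain ⟨hxB, hwB⟩ := Set.pair_subset_iff.1 hsub
  have hclique : G.IsClique B := hG.isBlockGraph B hB
  obtain ⟨z, hzB, hzF⟩ := hF.exists_forall_not_adj_of_odd_isClique hclique (hG.2 B hB).2
  have hzx : z ≠ x := by
    rintro rfl
    exact hzF w hwB hxw
  have hzw : z ≠ w := by
    rintro rfl
    exact hzF x hxB hxw.symm
  have hz : z ∉ reachableAvoiding G r x := fun hz ↦
    Set.disjoint_left.1 hx hxw (mem_reachableAvoiding_of_adj hz (hclique hzB hwB hzw) hxw.ne')
  have hrx : G.Reachable r x := hG.1 r x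
  exact ⟨z, hG.isBlockGraph.disjoint_neighborSet_reachableAvoiding hF.1 hB hxB hzB
    (mem_reachableAvoiding_of_notMem hrx hzx hz) hzF, reachableAvoiding_ssubset hrx hzx hz⟩

theorem InFamilyB.exists_isIsolated (hG : InFamilyB G) (hF : IsSemiperfectForest G F) :
    ∃ v, F.IsIsolated v := by
  obtain ⟨r⟩ := hG.1.nonempty
  obtain ⟨x, hx⟩ := (Set.toFinite
    {x | Disjoint (F.neighborSet x) (reachableAvoiding G r x)}).exists_maximalFor
      (reachableAvoiding G r) _ ⟨r, by simp [reachableAvoiding_root]⟩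
  refine ⟨x, by_contra fun hx_isolated ↦ ?_⟩
  obtain ⟨z, hz, hxz⟩ := hG.exists_reachableAvoiding_ssubset hF hx.prop hx_isolated
  exact hx.not_gt hz hxz

end Descent

theorem no_proper_one_perfect_forest_of_in_B_general {V : Type*} [Finite V]
    (G : SimpleGraph V) (hB : InFamilyB G) :
    ¬ ∃ F : SimpleGraph V, IsSemiperfectForest G F ∧ ∀ v : V, 0 < fdeg F v := by
  rintro ⟨F, hF, hpos⟩
  obtain ⟨v, hv⟩ := hB.exists_isIsolated hF
  have hdeg : fdeg F v = 0 := by rw [fdeg, hv.neighborSet_eq_empty, Set.ncard_empty]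
  exact (hpos v).ne' hdeg

/-- If `G` is a connected graph of odd order and `G` belongs to the family `B`
(of connected graphs in which every block is a complete graph of odd order),
then `G` contains no proper 1-perfect forest. -/
theorem no_proper_one_perfect_forest_of_in_B {V : Type*} [Fintype V]
    (G : SimpleGraph V) (hG : G.Connected) (hodd : Odd (Fintype.card V))
    (hB : InFamilyB G) :
    ¬ ∃ F : SimpleGraph V, IsSemiperfectForest G F ∧
        (∃! v : V, Even (fdeg F v)) ∧ ∀ v : V, 0 < fdeg F v := by
  rintro ⟨F, hF, -, hpos⟩
  exact no_proper_one_perfect_forest_of_in_B_general G hB ⟨F, hF, hpos⟩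
end

section
/- Let G be a connected graph of even order and let xy be an edge of G such that G − {x,y} is connected. If G − x belongs to B and G − y belongs to B, where B is the family of all connected graphs in which every block is a complete graph of odd order, then the closed neighbourhoods of x and y in G coincide: N_G[x] = N_G[y]. -/
open SimpleGraph

/-!
In a graph all of whose blocks are odd cliques, every nonseparable set of vertices lies in an odd
clique, by extending it to a block. Let `K` be the set of neighbours of `y` other than `x`. Any two
vertices of `K` are joined by a path of `G − {x, y}`, which `y` closes to a cycle of `G − x`; hence
`K ∪ {y}` is a clique. It is then a block of `G − x`, so `|K|` is even. In `G − y` the clique `K`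
lies in an odd clique `c`, and `c ≠ K` by parity. If `x ∉ c`, then `y` has two neighbours in `c`,
namely two elements of `K`, so in `G − x` it is adjacent to all of `c`, forcing `c = K`. Hence
`x ∈ c`, and `x` is adjacent to all of `K`; exchange `x` and `y` for the other inclusion.
-/

section OddCompleteBlocks

variable {V : Type*} {G : SimpleGraph V}

/-- The vertex set `s` is nonseparable in `G`: it induces a connected subgraph without a
cut-vertex. The blocks of `G` are the maximal nonseparable sets. -/
def IsNonseparable (G : SimpleGraph V) (s : Set V) : Prop :=
  (G.induce s).Connected ∧ ∀ x ∈ s, (G.induce (s \ {x})).Preconnected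

/-- Every block of `G` is a complete graph of odd order: membership in the family `B` without the
requirement that `G` be connected. Since `Set.ncard` is `0` on infinite sets, the blocks are
finite even when `G` is not. -/
def HasOddCompleteBlocks (G : SimpleGraph V) : Prop :=
  ∀ s : Set V, IsGraphBlock G s → G.IsClique s ∧ Odd s.ncard

namespace IsNonseparable

variable {s : Set V}

lemma preconnected_diff_singleton (hs : IsNonseparable G s) (x : V) :
    (G.induce (s \ {x})).Preconnected := by
  by_cases hx : x ∈ s
  · exact hs.2 x hx
  · rw [Set.sdiff_singleton_eq_self hx]
    exact hs.1.preconnected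

lemma sUnion_of_isChain {C : Set (Set V)} (hC : IsChain (· ⊆ ·) C) (hne : C.Nonempty)
    (h : ∀ s ∈ C, IsNonseparable G s) : IsNonseparable G (⋃₀ C) := by
  have exists_mem_of_mem {u v : V} (hu : u ∈ ⋃₀ C) (hv : v ∈ ⋃₀ C) : ∃ s ∈ C, u ∈ s ∧ v ∈ s := by
    obtain ⟨s, hs, hus⟩ := hu
    obtain ⟨t, ht, hvt⟩ := hv
    obtain ⟨r, hr, hsr, htr⟩ := hC.directedOn s hs t ht
    exact ⟨r, hr, hsr hus, htr hvt⟩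
  refine ⟨(connected_iff _).2 ⟨?_, ?_⟩, fun x _ ↦ ?_⟩
  · rintro ⟨u, hu⟩ ⟨v, hv⟩
    obtain ⟨s, hs, hus, hvs⟩ := exists_mem_of_mem hu hv
    exact ((h s hs).1.preconnected ⟨u, hus⟩ ⟨v, hvs⟩).map
      (G.induceHomOfLE (Set.subset_sUnion_of_mem hs)).toHom
  · obtain ⟨s, hs⟩ := hne
    obtain ⟨⟨v, hv⟩⟩ := (h s hs).1.nonempty
    exact ⟨⟨v, s, hs, hv⟩⟩
  · rintro ⟨u, hu, hux⟩ ⟨v, hv, hvx⟩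
    obtain ⟨s, hs, hus, hvs⟩ := exists_mem_of_mem hu hv
    exact ((h s hs).preconnected_diff_singleton x ⟨u, hus, hux⟩ ⟨v, hvs, hvx⟩).map
      (G.induceHomOfLE (Set.sdiff_subset_sdiff_left (Set.subset_sUnion_of_mem hs))).toHom

lemma exists_isGraphBlock_superset (hs : IsNonseparable G s) : ∃ b, s ⊆ b ∧ IsGraphBlock G b := by
  obtain ⟨b, hsb, hb⟩ := zorn_subset_nonempty {t | IsNonseparable G t}
    (fun C hCG hC hne ↦
      ⟨⋃₀ C, sUnion_of_isChain hC hne hCG, fun _ ↦ Set.subset_sUnion_of_mem⟩) s hs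
  exact ⟨b, hsb, hb.prop.1, hb.prop.2, fun t hbt ht ht' ↦ (hb.eq_of_subset ⟨ht, ht'⟩ hbt).symm⟩

end IsNonseparable

lemma preconnected_induce_induce_preimage_val {S t : Set V} (htS : t ⊆ S)
    (ht : (G.induce t).Preconnected) :
    ((G.induce S).induce (Subtype.val ⁻¹' t)).Preconnected :=
  ht.map (⟨fun v ↦ ⟨⟨v, htS v.2⟩, v.2⟩, id⟩ :
    G.induce t →g (G.induce S).induce (Subtype.val ⁻¹' t)) fun v ↦ ⟨⟨v, v.2⟩, rfl⟩

lemma IsNonseparable.preimage_val {S t : Set V} (ht : IsNonseparable G t) (htS : t ⊆ S) :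
    IsNonseparable (G.induce S) (Subtype.val ⁻¹' t) := by
  refine ⟨(connected_iff _).2 ⟨preconnected_induce_induce_preimage_val htS ht.1.preconnected, ?_⟩,
    fun x hx ↦ ?_⟩
  · obtain ⟨⟨v, hv⟩⟩ := ht.1.nonempty
    exact ⟨⟨⟨v, htS hv⟩, hv⟩⟩
  · have preimage_diff : (Subtype.val ⁻¹' t \ {x} : Set S) = Subtype.val ⁻¹' (t \ {x.1}) := by
      ext v
      simp [Subtype.ext_iff]
    rw [preimage_diff]
    exact preconnected_induce_induce_preimage_val (Set.sdiff_subset.trans htS) (ht.2 x hx)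

lemma isNonseparable_of_isClique {s : Set V} (hs : G.IsClique s) (hne : s.Nonempty) :
    IsNonseparable G s := by
  have := hne.to_subtype
  refine ⟨?_, fun x _ ↦ ?_⟩
  · rw [induce_eq_top.2 hs]
    exact connected_top
  · rw [induce_eq_top.2 (hs.subset Set.sdiff_subset)]
    exact preconnected_top

lemma isNonseparable_insert_support {a b y : V} {p : G.Walk a b} (hp : p.IsPath)
    (hy : y ∉ p.support) (ha : G.Adj y a) (hb : G.Adj y b) :
    IsNonseparable G (insert y {v | v ∈ p.support}) := by
  have reachable_of_walk {s : Set V} (hys : y ∈ s) {c u : V} (hc : G.Adj y c) (q : G.Walk c u)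
      (hq : ∀ w ∈ q.support, w ∈ s) :
      (G.induce s).Reachable ⟨y, hys⟩ ⟨u, hq u q.end_mem_support⟩ :=
    ((Walk.cons hc q).induce s (by simpa [hys] using hq)).reachable
  refine ⟨(connected_iff_exists_forall_reachable _).2 ⟨⟨y, Or.inl rfl⟩, ?_⟩, fun v _ ↦ ?_⟩
  · rintro ⟨u, rfl | hu⟩
    · rfl
    obtain ⟨q, r, rfl⟩ := p.mem_support_iff_exists_append.1 hu
    exact reachable_of_walk _ ha q fun w hw ↦ Or.inr (q.support_subset_support_append_left r hw)
  obtain rfl | hvy := eq_or_ne v y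
  · rw [Set.insert_sdiff_self_of_notMem (s := {w | w ∈ p.support}) hy]
    exact p.connected_induce_support.preconnected
  have hyv : y ∈ insert y {v | v ∈ p.support} \ {v} := ⟨Or.inl rfl, hvy.symm⟩
  refine ((connected_iff_exists_forall_reachable _).2 ⟨⟨y, hyv⟩, ?_⟩).preconnected
  rintro ⟨u, rfl | hu, huv⟩
  · rfl
  obtain ⟨q, r, rfl⟩ := p.mem_support_iff_exists_append.1 hu
  have notMem_or_notMem : v ∉ q.support ∨ v ∉ r.support := by
    by_contra! hv
    exact hp.ne_of_mem_support_of_append (Ne.symm huv) hv.1 hv.2 rfl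
  obtain hvq | hvr := notMem_or_notMem
  · exact reachable_of_walk hyv ha q fun w hw ↦
      ⟨Or.inr (q.support_subset_support_append_left r hw), ne_of_mem_of_not_mem hw hvq⟩
  · have hr : ∀ w ∈ r.reverse.support, w ∈ insert y {v | v ∈ (q.append r).support} \ {v} := by
      intro w hw
      rw [Walk.support_reverse, List.mem_reverse] at hw
      exact ⟨Or.inr (q.support_subset_support_append_right r hw), ne_of_mem_of_not_mem hw hvr⟩
    exact reachable_of_walk hyv hb r.reverse hr

namespace HasOddCompleteBlocks

variable {S : Set V} {y : V}

lemma exists_isClique_superset (hS : HasOddCompleteBlocks (G.induce S)) {t : Set V}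
    (ht : IsNonseparable G t) (htS : t ⊆ S) : ∃ c ⊆ S, t ⊆ c ∧ G.IsClique c ∧ Odd c.ncard := by
  obtain ⟨b, htb, hb⟩ := (ht.preimage_val htS).exists_isGraphBlock_superset
  obtain ⟨hclique, hodd⟩ := hS b hb
  refine ⟨Subtype.val '' b, Subtype.coe_image_subset S b, fun v hv ↦ ⟨⟨v, htS hv⟩, htb hv, rfl⟩,
    ?_, ?_⟩
  · rintro _ ⟨u, hu, rfl⟩ _ ⟨v, hv, rfl⟩ huv
    exact hclique hu hv (ne_of_apply_ne _ huv)
  · rwa [Set.ncard_image_of_injective _ Subtype.val_injective]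

lemma isClique_insert_support (hS : HasOddCompleteBlocks (G.induce S)) (hyS : y ∈ S) {a b : V}
    {p : G.Walk a b} (hp : p.IsPath) (hpS : ∀ v ∈ p.support, v ∈ S) (hy : y ∉ p.support)
    (ha : G.Adj y a) (hb : G.Adj y b) : G.IsClique (insert y {v | v ∈ p.support}) := by
  obtain ⟨c, -, hsub, hc, -⟩ := hS.exists_isClique_superset
    (isNonseparable_insert_support hp hy ha hb) (Set.insert_subset hyS hpS)
  exact hc.subset hsub

lemma adj_of_common_neighbors (hS : HasOddCompleteBlocks (G.induce S)) {a b u : V} (hyS : y ∈ S)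
    (haS : a ∈ S) (hbS : b ∈ S) (huS : u ∈ S) (hab : a ≠ b) (hyu : y ≠ u) (hya : G.Adj y a)
    (hyb : G.Adj y b) (hua : G.Adj u a) (hub : G.Adj u b) : G.Adj y u := by
  let p : G.Walk a b := .cons hua.symm (.cons hub .nil)
  have hp : p.IsPath := by simp [p, hab, hua.ne', hub.ne]
  have hclique := hS.isClique_insert_support hyS hp (by simp [p, haS, hbS, huS])
    (by simp [p, hya.ne, hyb.ne, hyu]) hya hyb
  exact hclique (by simp) (by simp [p]) hyu

lemma subset_neighborSet_of_isClique (hS : HasOddCompleteBlocks (G.induce S)) {c : Set V}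
    {a b : V} (hc : G.IsClique c) (hcS : c ⊆ S) (hyS : y ∈ S) (hyc : y ∉ c) (ha : a ∈ c)
    (hb : b ∈ c) (hab : a ≠ b) (hya : G.Adj y a) (hyb : G.Adj y b) : c ⊆ G.neighborSet y := by
  intro u hu
  obtain rfl | hua := eq_or_ne u a
  · exact hya
  obtain rfl | hub := eq_or_ne u b
  · exact hyb
  exact hS.adj_of_common_neighbors hyS (hcS ha) (hcS hb) (hcS hu) hab
    (ne_of_mem_of_not_mem hu hyc).symm hya hyb (hc hu ha hua) (hc hu hb hub)

lemma isClique_insert_neighborSet_inter (hS : HasOddCompleteBlocks (G.induce S)) (hyS : y ∈ S)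
    (hconn : (G.induce (S \ {y})).Preconnected) :
    G.IsClique (insert y (G.neighborSet y ∩ S)) := by
  refine isClique_insert.2 ⟨?_, fun v hv _ ↦ hv.1⟩
  rintro a ⟨hya, haS⟩ b ⟨hyb, hbS⟩ hab
  obtain ⟨p, hp⟩ := hconn.exists_isPath ⟨a, haS, hya.ne'⟩ ⟨b, hbS, hyb.ne'⟩
  let q := p.map (Embedding.induce (S \ {y})).toHom
  have hq : q.IsPath := hp.map Subtype.val_injective
  have hqS : ∀ v ∈ q.support, v ∈ S \ {y} := by
    intro v hv
    rw [Walk.support_map, List.mem_map] at hv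
    obtain ⟨w, -, rfl⟩ := hv
    exact w.2
  exact hS.isClique_insert_support hyS hq (fun v hv ↦ (hqS v hv).1) (fun hy ↦ (hqS y hy).2 rfl)
    hya hyb (Or.inr q.start_mem_support) (Or.inr q.end_mem_support) hab

lemma even_ncard_neighborSet_inter (hS : HasOddCompleteBlocks (G.induce S)) (hyS : y ∈ S)
    (hconn : (G.induce (S \ {y})).Preconnected) : Even (G.neighborSet y ∩ S).ncard := by
  have hclique := hS.isClique_insert_neighborSet_inter hyS hconn
  obtain ⟨c, hcS, hsub, hc, hodd⟩ := hS.exists_isClique_superset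
    (isNonseparable_of_isClique hclique (Set.insert_nonempty _ _))
    (Set.insert_subset hyS Set.inter_subset_right)
  have hyc : y ∈ c := hsub (Set.mem_insert _ _)
  have hdiff : G.neighborSet y ∩ S = c \ {y} := by
    ext v
    exact ⟨fun hv ↦ ⟨hsub (Or.inr hv), hv.1.ne'⟩,
      fun ⟨hvc, hvy⟩ ↦ ⟨hc hyc hvc (Ne.symm hvy), hcS hvc⟩⟩
  rw [hdiff, Set.ncard_sdiff_singleton_of_mem hyc]
  exact hodd.tsub_odd odd_one

lemma adj_of_preconnected_compl_pair {x v : V} (hxy : x ≠ y)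
    (hconn : (G.induce ({x, y} : Set V)ᶜ).Preconnected)
    (hx : HasOddCompleteBlocks (G.induce ({x} : Set V)ᶜ))
    (hy : HasOddCompleteBlocks (G.induce ({y} : Set V)ᶜ)) (hyv : G.Adj y v) (hvx : v ≠ x) :
    G.Adj x v := by
  set K := G.neighborSet y ∩ {x}ᶜ
  have hvK : v ∈ K := ⟨hyv, hvx⟩
  have hconn' : (G.induce ({x}ᶜ \ {y})).Preconnected := by
    rwa [Set.sdiff_eq, ← Set.compl_union, Set.singleton_union]
  have hclique : G.IsClique K :=
    (hx.isClique_insert_neighborSet_inter hxy.symm hconn').subset (Set.subset_insert _ _)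
  have heven : Even K.ncard := hx.even_ncard_neighborSet_inter hxy.symm hconn'
  obtain ⟨c, hcy, hKc, hc, hodd⟩ := hy.exists_isClique_superset
    (isNonseparable_of_isClique hclique ⟨v, hvK⟩) (fun u hu ↦ hu.1.ne')
  suffices hxc : x ∈ c from hc hxc (hKc hvK) hvx.symm
  by_contra hxc
  have hcx : c ⊆ {x}ᶜ := Set.subset_compl_singleton_iff.2 hxc
  obtain ⟨w, hwK, hwv⟩ : ∃ w ∈ K, w ≠ v := by
    have hfin : K.Finite := (Set.finite_of_ncard_pos hodd.pos).subset hKc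
    have hpos : 0 < K.ncard := (Set.ncard_pos hfin).2 ⟨v, hvK⟩
    exact Set.exists_ne_of_one_lt_ncard (by grind) v
  have hcN : c ⊆ G.neighborSet y := hx.subset_neighborSet_of_isClique hc hcx hxy.symm
    (fun hyc ↦ hcy hyc rfl) (hKc hwK) (hKc hvK) hwv hwK.1 hyv
  have hcK : c = K := (Set.subset_inter hcN hcx).antisymm hKc
  exact Nat.not_odd_iff_even.2 heven (hcK ▸ hodd)

end HasOddCompleteBlocks

theorem closed_nbhds_eq_of_in_B_general {x y : V} (hxy : G.Adj x y)
    (hconn : (G.induce ({x, y} : Set V)ᶜ).Preconnected)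
    (hx : HasOddCompleteBlocks (G.induce ({x} : Set V)ᶜ))
    (hy : HasOddCompleteBlocks (G.induce ({y} : Set V)ᶜ)) :
    insert x (G.neighborSet x) = insert y (G.neighborSet y) := by
  have hconn' : (G.induce ({y, x} : Set V)ᶜ).Preconnected := by rwa [Set.pair_comm]
  ext v
  simp only [Set.mem_insert_iff, mem_neighborSet]
  obtain rfl | hvx := eq_or_ne v x
  · simp [hxy.symm]
  obtain rfl | hvy := eq_or_ne v y
  · simp [hxy]
  simp only [hvx, hvy, false_or]
  exact ⟨fun h ↦ hy.adj_of_preconnected_compl_pair hxy.ne' hconn' hx h hvy,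
    fun h ↦ hx.adj_of_preconnected_compl_pair hxy.ne hconn hy h hvx⟩

end OddCompleteBlocks

/-- Let `G` be a connected graph of even order and let `xy` be an edge of `G` such that
`G − {x,y}` is connected. If `G − x ∈ B` and `G − y ∈ B`, then the closed neighbourhoods
of `x` and `y` in `G` coincide: `N_G[x] = N_G[y]`. -/
theorem closed_nbhds_eq_of_in_B {V : Type*} [Fintype V]
    (G : SimpleGraph V) (hG : G.Connected) (heven : Even (Fintype.card V))
    (x y : V) (hxy : G.Adj x y)
    (hconn : (G.induce (({x, y} : Set V)ᶜ)).Connected)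
    (hx : InFamilyB (G.induce (({x} : Set V)ᶜ)))
    (hy : InFamilyB (G.induce (({y} : Set V)ᶜ))) :
    insert x (G.neighborSet x) = insert y (G.neighborSet y) :=
  closed_nbhds_eq_of_in_B_general hxy hconn.preconnected hx.2 hy.2
end

section
/- A connected graph G of order n has a 0-perfect forest with at least n − 1 edges if and only if G is a tree in which every vertex has odd degree. -/
open SimpleGraph

section

variable {V : Type*} {F G : SimpleGraph V}

theorem isTree_iff_isAcyclic_and_card_le [Finite V] [Nonempty V] :
    F.IsTree ↔ F.IsAcyclic ∧ Nat.card V ≤ F.edgeSet.ncard + 1 := by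
  refine ⟨fun hF ↦ ⟨hF.isAcyclic, (isTree_iff_connected_and_card.mp hF).2.ge⟩, ?_⟩
  rintro ⟨hF, hcard⟩
  obtain ⟨T, hFT, -, hT⟩ := connected_top.exists_isTree_le_of_le_of_isAcyclic le_top hF
  have hT_card : T.edgeSet.ncard + 1 = Nat.card V := (isTree_iff_connected_and_card.mp hT).2
  have h_edges : F.edgeSet = T.edgeSet :=
    Set.eq_of_subset_of_ncard_le (edgeSet_mono hFT) (by lia)
  rwa [edgeSet_injective h_edges]

theorem isSemiperfectForest_self_iff : IsSemiperfectForest G G ↔ G.IsAcyclic :=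
  ⟨fun h ↦ h.2.1, fun h ↦ ⟨le_rfl, h, fun _ _ _ hadj ↦ hadj⟩⟩

theorem IsSemiperfectForest.eq_of_preconnected (h : IsSemiperfectForest G F)
    (hF : F.Preconnected) : F = G :=
  le_antisymm h.1 fun x y hadj ↦ h.2.2 x y (hF x y) hadj

theorem isSemiperfectForest_and_card_le_iff [Finite V] [Nonempty V] :
    IsSemiperfectForest G F ∧ Nat.card V ≤ F.edgeSet.ncard + 1 ↔ F = G ∧ G.IsTree := by
  constructor
  · rintro ⟨hF, hcard⟩
    have hF_tree : F.IsTree := isTree_iff_isAcyclic_and_card_le.mpr ⟨hF.2.1, hcard⟩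
    obtain rfl : F = G := hF.eq_of_preconnected hF_tree.preconnected
    exact ⟨rfl, hF_tree⟩
  · rintro ⟨rfl, hF⟩
    rwa [isSemiperfectForest_self_iff, ← isTree_iff_isAcyclic_and_card_le]

theorem zero_perfect_forest_card_sub_one_iff_general [Finite V] [Nonempty V]
    (G : SimpleGraph V) :
    (∃ F : SimpleGraph V, IsSemiperfectForest G F ∧ (∀ v : V, Odd (fdeg F v)) ∧
        Nat.card V - 1 ≤ F.edgeSet.ncard) ↔
      (G.IsTree ∧ ∀ v : V, Odd (fdeg G v)) := by
  constructor
  · rintro ⟨F, hF, hodd, hcard⟩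
    obtain ⟨rfl, hG⟩ :=
      isSemiperfectForest_and_card_le_iff.mp ⟨hF, tsub_le_iff_right.mp hcard⟩
    exact ⟨hG, hodd⟩
  · rintro ⟨hG, hodd⟩
    obtain ⟨hforest, hcard⟩ := isSemiperfectForest_and_card_le_iff.mpr ⟨rfl, hG⟩
    exact ⟨G, hforest, hodd, tsub_le_iff_right.mpr hcard⟩

end

/-- A connected graph `G` of order `n` has a 0-perfect forest with at least `n − 1` edges
if and only if `G` is a tree in which every vertex has odd degree. -/
theorem zero_perfect_forest_card_sub_one_iff {V : Type*} [Fintype V]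
    (G : SimpleGraph V) (hG : G.Connected) :
    (∃ F : SimpleGraph V, IsSemiperfectForest G F ∧ (∀ v : V, Odd (fdeg F v)) ∧
        Fintype.card V - 1 ≤ F.edgeSet.ncard) ↔
      (G.IsTree ∧ ∀ v : V, Odd (fdeg G v)) := by
  have := hG.nonempty
  simpa only [Nat.card_eq_fintype_card] using zero_perfect_forest_card_sub_one_iff_general G
end

section
/- Let G be a graph of order n. Then every 0-perfect forest of G has at least n/2 edges, and G has a 0-perfect forest with exactly n/2 edges if and only if G has a perfect matching. -/
open SimpleGraph

/-!
Summing degrees, a graph without isolated vertices has at least `n / 2` edges, with equality exactly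
when it is `1`-regular, that is, a perfect matching. Conversely, a walk in a matching only moves
back and forth along a single edge, so every component is a vertex or an edge, hence an induced
tree.
-/

section EdgeCount

variable {V : Type*}

theorem fdeg_eq_degree (F : SimpleGraph V) (v : V) [Fintype (F.neighborSet v)] :
    fdeg F v = F.degree v := by
  rw [fdeg, Set.ncard_eq_toFinset_card', ← neighborFinset_def, card_neighborFinset_eq_degree]

theorem fdeg_eq_one_iff {F : SimpleGraph V} {v : V} : fdeg F v = 1 ↔ ∃! w, F.Adj v w := by
  simp only [fdeg, Set.ncard_eq_one, Set.eq_singleton_iff_unique_mem, mem_neighborSet,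
    ExistsUnique]

theorem sum_fdeg_eq_two_mul_ncard_edgeSet [Fintype V] (F : SimpleGraph V) :
    ∑ v, fdeg F v = 2 * F.edgeSet.ncard := by
  classical
  simp only [fdeg_eq_degree, sum_degrees_eq_twice_card_edges, ← coe_edgeFinset,
    Set.ncard_coe_finset]

theorem card_le_two_mul_ncard_edgeSet_of_fdeg_pos [Fintype V] {F : SimpleGraph V}
    (hF : ∀ v, 0 < fdeg F v) : Fintype.card V ≤ 2 * F.edgeSet.ncard :=
  calc
    Fintype.card V = ∑ _v : V, 1 := Fintype.card_eq_sum_ones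
    _ ≤ ∑ v, fdeg F v := Finset.sum_le_sum fun v _ ↦ hF v
    _ = 2 * F.edgeSet.ncard := sum_fdeg_eq_two_mul_ncard_edgeSet F

theorem two_mul_ncard_edgeSet_eq_card_iff [Fintype V] {F : SimpleGraph V}
    (hF : ∀ v, 0 < fdeg F v) :
    2 * F.edgeSet.ncard = Fintype.card V ↔ ∀ v, fdeg F v = 1 :=
  calc
    2 * F.edgeSet.ncard = Fintype.card V ↔ ∑ _v : V, 1 = ∑ v, fdeg F v := by
      rw [sum_fdeg_eq_two_mul_ncard_edgeSet, ← Fintype.card_eq_sum_ones, eq_comm]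
    _ ↔ ∀ v ∈ Finset.univ, 1 = fdeg F v := Finset.sum_eq_sum_iff_of_le fun v _ ↦ hF v
    _ ↔ ∀ v, fdeg F v = 1 := by simp only [Finset.mem_univ, true_imp_iff, eq_comm]

end EdgeCount

section Matching

variable {V : Type*} {G F : SimpleGraph V}

theorem isPerfectMatching_iff_forall_fdeg_spanningCoe_eq_one {M : G.Subgraph} :
    M.IsPerfectMatching ↔ ∀ v, fdeg M.spanningCoe v = 1 := by
  simp only [Subgraph.isPerfectMatching_iff, fdeg_eq_one_iff, Subgraph.spanningCoe_adj]

theorem isAcyclic_of_subsingleton_neighborSet (hF : ∀ v, (F.neighborSet v).Subsingleton) :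
    F.IsAcyclic := fun v c hc ↦
  -- A cycle through `v` would leave and re-enter it through the same neighbour.
  hc.snd_ne_penultimate
    (hF v (c.adj_snd hc.not_nil) (c.adj_penultimate hc.not_nil).symm)

theorem eq_or_adj_of_reachable_of_subsingleton_neighborSet
    (hF : ∀ v, (F.neighborSet v).Subsingleton) {x y : V} (hxy : F.Reachable x y) :
    x = y ∨ F.Adj x y := by
  rw [reachable_iff_reflTransGen] at hxy
  induction hxy with
  | refl => exact .inl rfl
  | @tail b _ _ hbc ih =>
    rcases ih with rfl | hxb
    · exact .inr hbc
    · exact .inl (hF b hxb.symm hbc)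

theorem isSemiperfectForest_of_subsingleton_neighborSet (hFG : F ≤ G)
    (hF : ∀ v, (F.neighborSet v).Subsingleton) : IsSemiperfectForest G F :=
  ⟨hFG, isAcyclic_of_subsingleton_neighborSet hF, fun _ _ hxy hadj ↦
    (eq_or_adj_of_reachable_of_subsingleton_neighborSet hF hxy).resolve_left hadj.ne⟩

theorem isSemiperfectForest_of_forall_fdeg_eq_one (hFG : F ≤ G) (hF : ∀ v, fdeg F v = 1) :
    IsSemiperfectForest G F :=
  isSemiperfectForest_of_subsingleton_neighborSet hFG fun v _ hx _ hy ↦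
    (fdeg_eq_one_iff.1 (hF v)).unique hx hy

end Matching

theorem zero_perfect_forest_min_edges_and_perfect_matching_general {V : Type*} [Fintype V]
    (G : SimpleGraph V) :
    (∀ F : SimpleGraph V, (∀ v, 0 < fdeg F v) → Fintype.card V ≤ 2 * F.edgeSet.ncard) ∧
    List.TFAE [
      ∃ F ≤ G, (∀ v, 0 < fdeg F v) ∧ 2 * F.edgeSet.ncard = Fintype.card V,
      ∃ F : SimpleGraph V, IsSemiperfectForest G F ∧ (∀ v, Odd (fdeg F v)) ∧
        2 * F.edgeSet.ncard = Fintype.card V,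
      ∃ M : G.Subgraph, M.IsPerfectMatching] := by
  refine ⟨fun F ↦ card_le_two_mul_ncard_edgeSet_of_fdeg_pos, ?_⟩
  tfae_have 1 → 3 := fun ⟨F, hFG, hpos, hcard⟩ ↦
    ⟨toSubgraph F hFG, isPerfectMatching_iff_forall_fdeg_spanningCoe_eq_one.2
      ((two_mul_ncard_edgeSet_eq_card_iff hpos).1 hcard)⟩
  tfae_have 3 → 2 := fun ⟨M, hM⟩ ↦ by
    have hone := isPerfectMatching_iff_forall_fdeg_spanningCoe_eq_one.1 hM
    have hodd : ∀ v, Odd (fdeg M.spanningCoe v) := fun v ↦ hone v ▸ odd_one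
    exact ⟨M.spanningCoe, isSemiperfectForest_of_forall_fdeg_eq_one M.spanningCoe_le hone, hodd,
      (two_mul_ncard_edgeSet_eq_card_iff fun v ↦ (hodd v).pos).2 hone⟩
  tfae_have 2 → 1 := fun ⟨F, hF, hodd, hcard⟩ ↦ ⟨F, hF.1, fun v ↦ (hodd v).pos, hcard⟩
  tfae_finish

/-- Let `G` be a graph of order `n`. Then every 0-perfect forest of `G` has at least
`n/2` edges (stated as `n ≤ 2·|E(F)|`), and `G` has a 0-perfect forest with exactly
`n/2` edges (stated as `2·|E(F)| = n`) if and only if `G` has a perfect matching. -/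
theorem zero_perfect_forest_min_edges_and_perfect_matching {V : Type*} [Fintype V]
    (G : SimpleGraph V) :
    (∀ F : SimpleGraph V, IsSemiperfectForest G F → (∀ v : V, Odd (fdeg F v)) →
        Fintype.card V ≤ 2 * F.edgeSet.ncard) ∧
    ((∃ F : SimpleGraph V, IsSemiperfectForest G F ∧ (∀ v : V, Odd (fdeg F v)) ∧
        2 * F.edgeSet.ncard = Fintype.card V) ↔
      ∃ M : G.Subgraph, M.IsPerfectMatching) := by
  obtain ⟨card_le, tfae⟩ := zero_perfect_forest_min_edges_and_perfect_matching_general G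
  exact ⟨fun F _ hodd ↦ card_le F fun v ↦ (hodd v).pos, tfae.out 1 2⟩
end
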